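/- Let k be an integer, m a positive integer, r a positive integer, s an integer, and ν a nonnegative integer. Let Γ(r,m) = { [[a,b],[c,d]] ∈ SL₂(ℤ) : a ≡ 1, d ≡ 1, c ≡ 0 (mod r) and cm ≡ 0 (mod r²) }, a finite-index subgroup of SL₂(ℤ). Let g be a Jacobi form of weight k and index m, with Fourier coefficients c(n,ρ) and qⁿ-coefficients g_n(ζ) = Σ_ρ c(n,ρ) ζ^ρ. Then (ζ − e(s/r))^ν divides g_n(ζ) in ℂ[ζ,ζ⁻¹] for every n ≥ 0 if and only if Σ_{ρ∈ℤ} ρ^j c(n,ρ) e(ρs/r) = 0 for all integers j, n with 0 ≤ j < ν and 0 ≤ n ≤ ((k+j)/12)·[SL₂(ℤ) : Γ(r,m)]. -/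

import Mathlib

/-- The group `Γ(r,m) = { [[a,b],[c,d]] ∈ SL₂(ℤ) : a ≡ 1, d ≡ 1, c ≡ 0 (mod r),
cm ≡ 0 (mod r²) }`. -/
def GammaRM (r m : ℤ) : Subgroup (Matrix.SpecialLinearGroup (Fin 2) ℤ) where
  carrier := {γ | γ 0 0 ≡ 1 [ZMOD r] ∧ γ 1 1 ≡ 1 [ZMOD r] ∧
    γ 1 0 ≡ 0 [ZMOD r] ∧ γ 1 0 * m ≡ 0 [ZMOD r ^ 2]}
  one_mem' := by
    refine ⟨?_, ?_, ?_, ?_⟩ <;> simp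
  mul_mem' := by
    rintro A B ⟨hA1, hA2, hA3, hA4⟩ ⟨hB1, hB2, hB3, hB4⟩
    have hAB : ∀ i j : Fin 2, (A * B) i j = A i 0 * B 0 j + A i 1 * B 1 j := by
      intro i j
      simp [Matrix.SpecialLinearGroup.coe_mul, Matrix.mul_apply, Fin.sum_univ_two]
    refine ⟨?_, ?_, ?_, ?_⟩
    · rw [hAB]
      calc A 0 0 * B 0 0 + A 0 1 * B 1 0
          ≡ 1 * 1 + A 0 1 * 0 [ZMOD r] := (hA1.mul hB1).add (Int.ModEq.mul_left _ hB3)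
        _ = 1 := by ring
    · rw [hAB]
      calc A 1 0 * B 0 1 + A 1 1 * B 1 1
          ≡ 0 * B 0 1 + 1 * 1 [ZMOD r] := (Int.ModEq.mul_right _ hA3).add (hA2.mul hB2)
        _ = 1 := by ring
    · rw [hAB]
      calc A 1 0 * B 0 0 + A 1 1 * B 1 0
          ≡ 0 * B 0 0 + A 1 1 * 0 [ZMOD r] :=
            (Int.ModEq.mul_right _ hA3).add (Int.ModEq.mul_left _ hB3)
        _ = 0 := by ring
    · rw [hAB]
      have h4 : (A 1 0 * B 0 0 + A 1 1 * B 1 0) * m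
          = (A 1 0 * m) * B 0 0 + A 1 1 * (B 1 0 * m) := by ring
      rw [h4]
      have hA4' : r ^ 2 ∣ A 1 0 * m := (Int.modEq_zero_iff_dvd).mp hA4
      have hB4' : r ^ 2 ∣ B 1 0 * m := (Int.modEq_zero_iff_dvd).mp hB4
      exact (Int.modEq_zero_iff_dvd).mpr
        (dvd_add (hA4'.mul_right _) (hB4'.mul_left _))
  inv_mem' := by
    rintro A ⟨hA1, hA2, hA3, hA4⟩
    have hinv : ∀ i j : Fin 2,
        A⁻¹ i j = (!![A 1 1, -A 0 1; -A 1 0, A 0 0] : Matrix (Fin 2) (Fin 2) ℤ) i j := by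
      intro i j
      rw [Matrix.SpecialLinearGroup.SL2_inv_expl A]
      simp [Matrix.etaExpand_eq]
    refine ⟨?_, ?_, ?_, ?_⟩
    · rw [hinv]; simpa using hA2
    · rw [hinv]; simpa using hA1
    · rw [hinv]
      simpa using hA3.neg
    · rw [hinv]
      have he : (!![A 1 1, -A 0 1; -A 1 0, A 0 0] : Matrix (Fin 2) (Fin 2) ℤ) 1 0 = -A 1 0 := by
        simp
      rw [he]
      calc (-(A 1 0)) * m = -(A 1 0 * m) := by ring
        _ ≡ -0 [ZMOD r ^ 2] := hA4.neg
        _ = 0 := by ring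

open Complex LaurentPolynomial

/-!
Let `a = e(s/r)`. In characteristic zero, `(ζ - a) ^ ν` divides a Laurent polynomial iff its moments
`∑ ρ ^ j c(n,ρ) a ^ ρ` vanish for `j < ν`. For fixed `j` these moments are the `q`-coefficients of
`f_j(τ) = ∑ ρ ^ j c(n,ρ) qⁿ e(ρs/r)`, which is `(2πi)^(-j)` times the `j`-th `z`-derivative of `g`
at `z = s/r`. If `f_i = 0` for all `i < j`, then `f_j` inherits the transformation laws of `g` at
`z = s/r`, because by Leibniz' rule no derivative falls on the automorphy factors. For `γ ∈ Γ(r,m)`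
the modular law moves `s/r` by a lattice vector, the elliptic law moves it back, and the two
exponential factors cancel. So `f_j` is a modular form of weight `k + j` on `Γ(r,m)`, Sturm's bound
makes the finitely many given conditions force `f_j = 0`, and one concludes by induction on `j`.
-/

theorem iteratedDeriv_fun_mul_of_forall_lt_eq_zero {𝕜 𝔸 : Type*} [NontriviallyNormedField 𝕜]
    [NormedRing 𝔸] [NormedAlgebra 𝕜 𝔸] {n : ℕ} {x : 𝕜} {f g : 𝕜 → 𝔸} (hf : ContDiffAt 𝕜 n f x)
    (hg : ContDiffAt 𝕜 n g x) (h : ∀ i < n, iteratedDeriv i g x = 0) :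
    iteratedDeriv n (fun y => f y * g y) x = f x * iteratedDeriv n g x := by
  rw [iteratedDeriv_fun_mul hf hg, Finset.sum_eq_single_of_mem 0 (by simp)]
  · simp
  · intro i hi hi0
    rw [h _ (by grind), mul_zero]

section LaurentMoment

variable {R : Type*} [CommRing R] (a : Rˣ)

/-- The `j`-th moment `∑ ρ, ρ ^ j * f_ρ * a ^ ρ` of a Laurent polynomial `f` at a unit `a`, that
is, the value at `a` of `(T d/dT)^j f`. -/
noncomputable def laurentMoment (j : ℕ) : R[T;T⁻¹] →ₗ[R] R :=
  Finsupp.linearCombination R (fun ρ : ℤ => (ρ : R) ^ j * ↑(a ^ ρ)) ∘ₗ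
    (AddMonoidAlgebra.coeffLinearEquiv R).toLinearMap

theorem laurentMoment_apply (j : ℕ) (f : R[T;T⁻¹]) :
    laurentMoment a j f = f.coeff.sum fun ρ b => b * ((ρ : R) ^ j * ↑(a ^ ρ)) :=
  Finsupp.linearCombination_apply R f.coeff

theorem laurentMoment_C_mul_T (j : ℕ) (b : R) (n : ℤ) :
    laurentMoment a j (C b * T n) = b * ((n : R) ^ j * ↑(a ^ n)) := by
  rw [← single_eq_C_mul_T, laurentMoment_apply, AddMonoidAlgebra.coeff_single,
    Finsupp.sum_single_index (zero_mul _)]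

theorem laurentMoment_eq_finsum (j : ℕ) (f : R[T;T⁻¹]) :
    laurentMoment a j f = ∑ᶠ ρ : ℤ, (ρ : R) ^ j * f.coeff ρ * ↑(a ^ ρ) := by
  rw [laurentMoment_apply, finsum_eq_sum_of_support_subset (s := f.coeff.support)]
  · exact Finset.sum_congr rfl fun ρ _ => by ring
  · intro ρ hρ
    contrapose! hρ
    simp_all

theorem laurentMoment_zero_eq_eval₂ (f : R[T;T⁻¹]) :
    laurentMoment a 0 f = eval₂ (RingHom.id R) a f := by
  induction f using LaurentPolynomial.induction_on' with
  | add p q hp hq => rw [map_add, map_add, hp, hq]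
  | C_mul_T n b => simp [laurentMoment_C_mul_T]

theorem laurentMoment_T_sub_C_mul (j : ℕ) (f : R[T;T⁻¹]) :
    laurentMoment a j ((T 1 - C (a : R)) * f) =
      a * ∑ i ∈ Finset.range j, (j.choose i : R) * laurentMoment a i f := by
  induction f using LaurentPolynomial.induction_on' with
  | add p q hp hq =>
    rw [mul_add, map_add, hp, hq, ← mul_add, ← Finset.sum_add_distrib]
    simp only [map_add, mul_add]
  | C_mul_T n b =>
    have hmul : (T 1 - C (a : R)) * (C b * T n) = C b * T (n + 1) - C ((a : R) * b) * T n := by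
      rw [T_add, map_mul]
      ring
    have hbinom : ((n : R) + 1) ^ j =
        ∑ i ∈ Finset.range j, (j.choose i : R) * (n : R) ^ i + (n : R) ^ j := by
      rw [add_pow, Finset.sum_range_succ]
      simp [mul_comm]
    have hsum : ∑ i ∈ Finset.range j, (j.choose i : R) * (b * ((n : R) ^ i * ↑(a ^ n))) =
        b * ↑(a ^ n) * ∑ i ∈ Finset.range j, (j.choose i : R) * (n : R) ^ i := by
      rw [Finset.mul_sum]
      exact Finset.sum_congr rfl fun i _ => by ring
    simp only [hmul, map_sub, laurentMoment_C_mul_T, hsum]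
    push_cast [zpow_add_one, hbinom]
    ring

theorem T_sub_C_dvd_iff_laurentMoment_zero {f : R[T;T⁻¹]} :
    T 1 - C (a : R) ∣ f ↔ laurentMoment a 0 f = 0 := by
  refine ⟨fun ⟨h, hf⟩ => by rw [hf, laurentMoment_T_sub_C_mul, Finset.range_zero,
    Finset.sum_empty, mul_zero], fun h => ?_⟩
  obtain ⟨N, p, hp⟩ := exists_T_pow f
  have hroot : p.IsRoot a := by
    rw [Polynomial.IsRoot, ← Polynomial.eval₂_id, ← eval₂_toLaurent, hp, map_mul,
      ← laurentMoment_zero_eq_eval₂, h, zero_mul]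
  obtain ⟨p', rfl⟩ := Polynomial.dvd_iff_isRoot.2 hroot
  refine (isUnit_T (N : ℤ)).dvd_mul_right.1 ⟨Polynomial.toLaurent p', ?_⟩
  simp [← hp]

theorem T_sub_C_pow_dvd_iff_laurentMoment [IsAddTorsionFree R] {ν : ℕ} {f : R[T;T⁻¹]} :
    (T 1 - C (a : R)) ^ ν ∣ f ↔ ∀ j < ν, laurentMoment a j f = 0 := by
  induction ν generalizing f with
  | zero => simp
  | succ ν ih =>
    constructor
    · rintro ⟨h, hf⟩ j hj
      rw [hf, pow_succ', mul_assoc, laurentMoment_T_sub_C_mul, Finset.sum_eq_zero, mul_zero]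
      intro i hi
      rw [ih.1 (dvd_mul_right _ h) i (by grind), mul_zero]
    · intro H
      obtain ⟨h, rfl⟩ := (T_sub_C_dvd_iff_laurentMoment_zero a).2 (H 0 ν.succ_pos)
      rw [pow_succ']
      refine mul_dvd_mul_left _ (ih.2 fun j => ?_)
      induction j using Nat.strong_induction_on with
      | _ j ihj =>
        intro hj
        have hmoment := H (j + 1) (by lia)
        rw [laurentMoment_T_sub_C_mul, Units.mul_right_eq_zero, Finset.sum_range_succ,
          Finset.sum_eq_zero fun i hi => by rw [ihj i (by grind) (by grind), mul_zero],
          zero_add, Nat.choose_succ_self_right, ← nsmul_eq_mul] at hmoment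
        exact (smul_eq_zero_iff_right j.succ_ne_zero).1 hmoment

end LaurentMoment

section SturmBound

open UpperHalfPlane Filter Asymptotics Function.Periodic
open scoped MatrixGroups ModularForm Topology

theorem natCast_le_analyticOrderAt_iff_isBigO {𝕜 E : Type*} [NontriviallyNormedField 𝕜]
    [NormedAddCommGroup E] [NormedSpace 𝕜 E] {f : 𝕜 → E} {z₀ : 𝕜} (hf : AnalyticAt 𝕜 f z₀)
    {n : ℕ} : n ≤ analyticOrderAt f z₀ ↔ f =O[𝓝[≠] z₀] fun z => (z - z₀) ^ n := by
  constructor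
  · intro h
    obtain ⟨g, hg, hfg⟩ := (natCast_le_analyticOrderAt hf).1 h
    have hg1 : g =O[𝓝 z₀] fun _ => (1 : 𝕜) := hg.continuousAt.isBigO_one 𝕜
    refine (((isBigO_refl (fun z => (z - z₀) ^ n) (𝓝 z₀)).smul hg1).congr' ?_ ?_).mono
      nhdsWithin_le_nhds
    · exact hfg.mono fun z hz => hz.symm
    · exact Eventually.of_forall fun z => by simp
  · intro hO
    by_contra! hlt
    obtain ⟨m, hm⟩ := ENat.ne_top_iff_exists.1 hlt.ne_top
    obtain ⟨g, hg, hg0, hfg⟩ := (hf.analyticOrderAt_eq_natCast).1 hm.symm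
    have hmn : m < n := by rwa [← hm, ENat.natCast_lt_natCast] at hlt
    have hgO : g =O[𝓝[≠] z₀] fun z => (z - z₀) ^ (n - m) := by
      refine ((isBigO_refl (fun z => ((z - z₀) ^ m)⁻¹) _).smul hO).congr' ?_ ?_
      · filter_upwards [self_mem_nhdsWithin, hfg.filter_mono nhdsWithin_le_nhds] with z hz hfz
        rw [hfz, inv_smul_smul₀ (pow_ne_zero _ (sub_ne_zero_of_ne hz))]
      · filter_upwards [self_mem_nhdsWithin] with z hz
        rw [smul_eq_mul, pow_sub₀ _ (sub_ne_zero_of_ne hz) hmn.le, mul_comm]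
    have hlim : Tendsto (fun z => (z - z₀) ^ (n - m)) (𝓝[≠] z₀) (𝓝 0) := by
      have : ContinuousAt (fun z => (z - z₀) ^ (n - m)) z₀ := by fun_prop
      simpa [Nat.sub_ne_zero_of_lt hmn] using this.tendsto.mono_left nhdsWithin_le_nhds
    exact hg0 (tendsto_nhds_unique (hg.continuousAt.tendsto.mono_left nhdsWithin_le_nhds)
      (hgO.trans_tendsto hlim))

theorem natCast_le_order_qExpansion_iff_isBigO {f : ℍ → ℂ} {h : ℝ} (hh : 0 < h)
    (hper : Function.Periodic (f ∘ ofComplex) h) (hf : AnalyticAt ℂ (cuspFunction h f) 0) {n : ℕ} :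
    n ≤ (qExpansion h f).order ↔ f =O[atImInfty] fun τ : ℍ => qParam h τ ^ n := by
  have hcoeff : n ≤ (qExpansion h f).order ↔ n ≤ analyticOrderAt (cuspFunction h f) 0 := by
    rw [natCast_le_analyticOrderAt_iff_iteratedDeriv_eq_zero hf]
    have hiff (i : ℕ) : (qExpansion h f).coeff i = 0 ↔
        iteratedDeriv i (cuspFunction h f) 0 = 0 := by
      simp [qExpansion_coeff, i.factorial_ne_zero]
    exact ⟨fun hn i hi => (hiff i).1 (PowerSeries.coeff_of_lt_order _
      ((ENat.natCast_lt_natCast.2 hi).trans_le hn)),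
      fun hn => PowerSeries.nat_le_order _ _ fun i hi => (hiff i).2 (hn i hi)⟩
  rw [hcoeff, natCast_le_analyticOrderAt_iff_isBigO hf]
  simp only [sub_zero]
  constructor <;> intro hO
  · refine (hO.comp_tendsto ((qParam_tendsto hh).comp tendsto_coe_atImInfty)).congr_left fun τ => ?_
    exact UpperHalfPlane.eq_cuspFunction τ hh.ne' hper
  · refine (hO.comp_tendsto (tendsto_comap_im_ofComplex.comp (invQParam_tendsto hh))).congr' ?_ ?_
    · filter_upwards [self_mem_nhdsWithin] with q hq
      exact (cuspFunction_eq_of_nonzero h (f ∘ ofComplex) hq).symm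
    · have him := ((invQParam_tendsto hh).eventually (preimage_mem_comap (Ioi_mem_atTop 0)))
      filter_upwards [self_mem_nhdsWithin, him] with q hq hq'
      simp [ofComplex_apply_of_im_pos hq', qParam_right_inv hh.ne' hq]

variable {𝒢 : Subgroup (GL (Fin 2) ℝ)} {k : ℤ}

theorem isBoundedAtImInfty_quotientFunc {ℋ : Subgroup (GL (Fin 2) ℝ)} [𝒢.IsFiniteRelIndex ℋ]
    (f : ModularForm 𝒢 k) (hℋ : IsCusp OnePoint.infty ℋ) (q : ℋ ⧸ 𝒢.subgroupOf ℋ) :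
    IsBoundedAtImInfty (SlashInvariantForm.quotientFunc f q) := by
  induction q using Quotient.inductionOn with
  | h γ =>
    rw [SlashInvariantForm.quotientFunc_mk]
    have hcusp := hℋ.of_isFiniteRelIndex_conj (𝒢 := 𝒢) γ.2
    have hbdd := (ModularForm.translate f γ.1⁻¹).bdd_at_cusps' (by simpa using hcusp) 1
      (one_smul _ _)
    rwa [SlashAction.slash_one] at hbdd

theorem norm_isBigO_atImInfty {ℋ : Subgroup (GL (Fin 2) ℝ)} [𝒢.IsFiniteRelIndex ℋ]
    [ℋ.HasDetPlusMinusOne] (f : ModularForm 𝒢 k) (hℋ : IsCusp OnePoint.infty ℋ) :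
    (ModularForm.norm ℋ f : ℍ → ℂ) =O[atImInfty] (f : ℍ → ℂ) := by
  classical
  let := Fintype.ofFinite (ℋ ⧸ 𝒢.subgroupOf ℋ)
  have hone : SlashInvariantForm.quotientFunc f (⟦1⟧ : ℋ ⧸ 𝒢.subgroupOf ℋ) = f := by simp
  have hother : (∏ q ∈ Finset.univ.erase (⟦1⟧ : ℋ ⧸ 𝒢.subgroupOf ℋ),
      SlashInvariantForm.quotientFunc f q) =O[atImInfty] fun _ => (1 : ℝ) := by
    have hbdd (q : ℋ ⧸ 𝒢.subgroupOf ℋ) :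
        SlashInvariantForm.quotientFunc f q =O[atImInfty] fun _ => (1 : ℝ) :=
      isBoundedAtImInfty_quotientFunc f hℋ q
    rw [Finset.prod_fn]
    exact (IsBigO.finsetProd fun q _ => hbdd q).congr_right fun _ => Finset.prod_const_one
  have hnorm : (ModularForm.norm ℋ f : ℍ → ℂ) = f *
      ∏ q ∈ Finset.univ.erase (⟦1⟧ : ℋ ⧸ 𝒢.subgroupOf ℋ), SlashInvariantForm.quotientFunc f q := by
    rw [← hone, Finset.mul_prod_erase _ _ (Finset.mem_univ _), ModularForm.coe_norm]
    rfl
  rw [hnorm]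
  exact ((isBigO_refl (f : ℍ → ℂ) atImInfty).norm_right.mul hother).trans <| by
    simpa using isBigO_refl (f : ℍ → ℂ) atImInfty

theorem sturm_bound [𝒢.IsArithmetic] (f : ModularForm 𝒢 k) (h𝒢 : 1 ∈ 𝒢.strictPeriods)
    (hf : ∀ n : ℕ, 12 * (n : ℤ) ≤ k * 𝒢.relIndex 𝒮ℒ → (qExpansion 1 f).coeff n = 0) :
    f = 0 := by
  rcases lt_or_ge k 0 with hk | hk
  · exact ModularForm.isZero_of_neg_weight hk f
  have hweight : 0 ≤ k * 𝒢.relIndex 𝒮ℒ := by positivity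
  set M := (k * 𝒢.relIndex 𝒮ℒ).toNat / 12 + 1
  have horder : M ≤ (qExpansion 1 f).order :=
    PowerSeries.nat_le_order _ _ fun n hn => hf n (by lia)
  -- The norm of `f` to level one is `f` times functions bounded at `i∞`, hence vanishes at `i∞` to
  -- at least the order of `f`; its weight is `k` times the index.
  have hnormO : (ModularForm.norm 𝒮ℒ f : ℍ → ℂ) =O[atImInfty] fun τ : ℍ => qParam 1 τ ^ M :=
    (norm_isBigO_atImInfty f (isCusp_SL2Z_iff'.2 ⟨1, by simp⟩)).trans
      ((natCast_le_order_qExpansion_iff_isBigO one_pos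
        (SlashInvariantFormClass.periodic_comp_ofComplex f h𝒢)
        (ModularFormClass.analyticAt_cuspFunction_zero f one_pos h𝒢)).1 horder)
  have hnormOrder : M ≤ (qExpansion 1 (ModularForm.norm 𝒮ℒ f)).order :=
    (natCast_le_order_qExpansion_iff_isBigO one_pos
      (SlashInvariantFormClass.periodic_comp_ofComplex _ one_mem_strictPeriods_SL)
      (ModularFormClass.analyticAt_cuspFunction_zero _ one_pos one_mem_strictPeriods_SL)).2 hnormO
  have hnorm : ModularForm.norm 𝒮ℒ f = 0 :=
    ModularForm.sturm_bound_levelOne <|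
      (ENat.natCast_lt_natCast.2 (Nat.lt_succ_self _)).trans_le hnormOrder
  exact DFunLike.coe_injective ((ModularForm.norm_eq_zero_iff _ _).1 hnorm)

theorem relIndex_map_mapGL (G : Subgroup SL(2, ℤ)) :
    (G.map (Matrix.SpecialLinearGroup.mapGL ℝ)).relIndex 𝒮ℒ = G.index := by
  rw [MonoidHom.range_eq_map, Subgroup.relIndex_map_map_of_injective,
    Subgroup.relIndex_top_right]
  exact Matrix.SpecialLinearGroup.mapGL_injective

theorem one_mem_strictPeriods_map_mapGL {G : Subgroup SL(2, ℤ)} (hT : ModularGroup.T ∈ G) :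
    (1 : ℝ) ∈ (G.map (Matrix.SpecialLinearGroup.mapGL ℝ)).strictPeriods := by
  refine Subgroup.mem_strictPeriods_iff.2 ⟨ModularGroup.T, hT, ?_⟩
  ext i j
  rw [Matrix.SpecialLinearGroup.mapGL_coe_matrix, Matrix.SpecialLinearGroup.map_apply_coe,
    ModularGroup.coe_T]
  fin_cases i <;> fin_cases j <;> simp

theorem sturm_bound_of_hasSum {G : Subgroup SL(2, ℤ)} [G.FiniteIndex]
    (hT : ModularGroup.T ∈ G) (f : ModularForm (G.map (Matrix.SpecialLinearGroup.mapGL ℝ)) k)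
    {a : ℕ → ℂ} (ha : ∀ τ : ℍ, HasSum (fun n => a n • qParam 1 τ ^ n) (f τ))
    (h0 : ∀ n : ℕ, 12 * (n : ℤ) ≤ k * G.index → a n = 0) (n : ℕ) : a n = 0 := by
  have hper := one_mem_strictPeriods_map_mapGL hT
  have hcoeff := ModularFormClass.qExpansion_coeff_unique one_pos hper ha
  have hf : f = 0 := by
    refine sturm_bound f hper fun i hi => ?_
    rw [relIndex_map_mapGL] at hi
    rw [← hcoeff, h0 i hi]
  rw [hcoeff, hf, FunLike.coe_zero, qExpansion_zero, map_zero]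

end SturmBound

section JacobiSeries

open scoped Real

/-- The term `a(n,ρ) qⁿ ζ^ρ` of a two-variable Fourier expansion, at `p = (n, ρ)`. -/
noncomputable def jacobiTerm (a : ℤ × ℤ → ℂ) (τ z : ℂ) (p : ℤ × ℤ) : ℂ :=
  a p * exp (2 * π * I * (p.1 * τ + p.2 * z))

/-- The two-variable Fourier series `∑ a(n,ρ) qⁿ ζ^ρ`, where `q = e(τ)` and `ζ = e(z)`. -/
noncomputable def jacobiSeries (a : ℤ × ℤ → ℂ) (τ z : ℂ) : ℂ :=
  ∑' p, jacobiTerm a τ z p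

/-- Absolute convergence of the Fourier series with coefficients `a` on `ℍ × ℂ`. -/
def JacobiSummable (a : ℤ × ℤ → ℂ) : Prop :=
  ∀ τ z : ℂ, 0 < τ.im → Summable fun p => ‖jacobiTerm a τ z p‖

/-- The coefficients `ρ ^ j * a(n,ρ)` of the series obtained by applying `((2πi)⁻¹ d/dz)^j`. -/
def jacobiMoment (a : ℤ × ℤ → ℂ) (j : ℕ) (p : ℤ × ℤ) : ℂ :=
  (p.2 : ℂ) ^ j * a p

variable {a : ℤ × ℤ → ℂ}

theorem jacobiMoment_zero : jacobiMoment a 0 = a := by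
  ext p
  simp [jacobiMoment]

theorem jacobiMoment_succ (j : ℕ) :
    jacobiMoment a (j + 1) = jacobiMoment (jacobiMoment a j) 1 := by
  ext p
  simp [jacobiMoment, pow_succ', mul_assoc]

theorem jacobiTerm_jacobiMoment (j : ℕ) (τ z : ℂ) (p : ℤ × ℤ) :
    jacobiTerm (jacobiMoment a j) τ z p = (p.2 : ℂ) ^ j * jacobiTerm a τ z p :=
  mul_assoc _ _ _

theorem norm_jacobiTerm (τ z : ℂ) (p : ℤ × ℤ) :
    ‖jacobiTerm a τ z p‖ = ‖a p‖ * Real.exp (-(2 * π * (p.1 * τ.im + p.2 * z.im))) := by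
  rw [jacobiTerm, norm_mul, norm_exp]
  simp

theorem norm_jacobiTerm_add_le (τ z w : ℂ) (p : ℤ × ℤ) :
    ‖jacobiTerm a τ (z + w) p‖ ≤ ‖jacobiTerm a τ z p‖ * Real.exp (2 * π * |(p.2 : ℝ)| * ‖w‖) := by
  have hle : -(p.2 * w.im) ≤ |(p.2 : ℝ)| * ‖w‖ :=
    (neg_le_abs _).trans (abs_mul (p.2 : ℝ) w.im ▸ by gcongr; exact abs_im_le_norm w)
  rw [norm_jacobiTerm, norm_jacobiTerm, mul_assoc ‖a p‖, ← Real.exp_add, add_im]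
  gcongr
  nlinarith [Real.pi_pos]

theorem norm_jacobiTerm_mul_exp_le (τ z : ℂ) (p : ℤ × ℤ) :
    ‖jacobiTerm a τ z p‖ * Real.exp (2 * π * |(p.2 : ℝ)|) ≤
      ‖jacobiTerm a τ (z - I) p‖ + ‖jacobiTerm a τ (z + I) p‖ := by
  have hexp : Real.exp (2 * π * |(p.2 : ℝ)|) ≤
      Real.exp (2 * π * p.2) + Real.exp (-(2 * π * p.2)) := by
    rcases abs_choice (p.2 : ℝ) with h | h <;> rw [h]
    · exact le_add_of_nonneg_right (Real.exp_pos _).le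
    · exact mul_neg (2 * π) (p.2 : ℝ) ▸ le_add_of_nonneg_left (Real.exp_pos _).le
  refine (mul_le_mul_of_nonneg_left hexp (norm_nonneg _)).trans_eq ?_
  simp only [norm_jacobiTerm, mul_add, mul_assoc, ← Real.exp_add, sub_im, add_im, I_im]
  ring_nf

-- Convergence at `z ± i` leaves room at `z` for any power of `ρ`, and for moving `z` in a unit ball.
theorem JacobiSummable.mul_exp (ha : JacobiSummable a) {τ : ℂ} (hτ : 0 < τ.im) (z : ℂ) :
    Summable fun p => ‖jacobiTerm a τ z p‖ * Real.exp (2 * π * |(p.2 : ℝ)|) :=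
  .of_nonneg_of_le (fun _ => by positivity) (norm_jacobiTerm_mul_exp_le τ z)
    ((ha τ (z - I) hτ).add (ha τ (z + I) hτ))

theorem JacobiSummable.jacobiMoment (ha : JacobiSummable a) (j : ℕ) :
    JacobiSummable (jacobiMoment a j) := by
  intro τ z hτ
  refine .of_nonneg_of_le (fun p => norm_nonneg _) (fun p => ?_)
    ((ha.mul_exp hτ z).mul_left (j.factorial : ℝ))
  have hpow : |(p.2 : ℝ)| ^ j ≤ j.factorial * Real.exp (2 * π * |(p.2 : ℝ)|) := by
    have hexp := Real.pow_div_factorial_le_exp |(p.2 : ℝ)| (abs_nonneg _) j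
    refine ((div_le_iff₀' (by positivity)).1 hexp).trans ?_
    gcongr
    nlinarith [Real.pi_gt_three, abs_nonneg (p.2 : ℝ)]
  rw [jacobiTerm_jacobiMoment, norm_mul, norm_pow, norm_intCast, mul_left_comm, mul_comm]
  gcongr

theorem hasDerivAt_jacobiTerm (τ z : ℂ) (p : ℤ × ℤ) :
    HasDerivAt (fun w => jacobiTerm a τ w p)
      (2 * π * I * jacobiTerm (jacobiMoment a 1) τ z p) z := by
  have hlin : HasDerivAt (fun w : ℂ => 2 * π * I * (p.1 * τ + p.2 * w)) (2 * π * I * p.2) z := by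
    simpa only [mul_one] using
      (((hasDerivAt_id' z).const_mul (p.2 : ℂ)).const_add (p.1 * τ)).const_mul (2 * π * I)
  refine (hlin.cexp.const_mul (a p)).congr_deriv ?_
  rw [jacobiTerm_jacobiMoment, jacobiTerm]
  ring

theorem norm_jacobiTerm_le_of_mem_ball {τ z w : ℂ} (hw : w ∈ Metric.ball z 1) (p : ℤ × ℤ) :
    ‖jacobiTerm a τ w p‖ ≤ ‖jacobiTerm a τ z p‖ * Real.exp (2 * π * |(p.2 : ℝ)|) := by
  have hle := norm_jacobiTerm_add_le (a := a) τ z (w - z) p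
  rw [add_sub_cancel] at hle
  refine hle.trans ?_
  have hw' : 2 * π * |(p.2 : ℝ)| * ‖w - z‖ ≤ 2 * π * |(p.2 : ℝ)| :=
    mul_le_of_le_one_right (by positivity) (mem_ball_iff_norm.1 hw).le
  gcongr

theorem hasDerivAt_jacobiSeries (ha : JacobiSummable a) {τ : ℂ} (hτ : 0 < τ.im) (z : ℂ) :
    HasDerivAt (jacobiSeries a τ) (2 * π * I * jacobiSeries (jacobiMoment a 1) τ z) z := by
  have hbound (p : ℤ × ℤ) (w : ℂ) (hw : w ∈ Metric.ball z 1) :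
      ‖2 * π * I * jacobiTerm (jacobiMoment a 1) τ w p‖ ≤ ‖2 * π * I‖ *
        (‖jacobiTerm (jacobiMoment a 1) τ z p‖ * Real.exp (2 * π * |(p.2 : ℝ)|)) := by
    rw [norm_mul]
    gcongr
    exact norm_jacobiTerm_le_of_mem_ball hw p
  rw [jacobiSeries, ← tsum_mul_left]
  exact hasDerivAt_tsum_of_isPreconnected (g := fun p w => jacobiTerm a τ w p)
    (((ha.jacobiMoment 1).mul_exp hτ z).mul_left ‖2 * π * I‖) Metric.isOpen_ball
    (convex_ball z 1).isPreconnected (fun p w _ => hasDerivAt_jacobiTerm τ w p) hbound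
    (Metric.mem_ball_self one_pos) (ha τ z hτ).of_norm (Metric.mem_ball_self one_pos)

theorem contDiff_jacobiSeries (ha : JacobiSummable a) {τ : ℂ} (hτ : 0 < τ.im) {n : WithTop ℕ∞} :
    ContDiff ℂ n (jacobiSeries a τ) :=
  Differentiable.contDiff fun z => (hasDerivAt_jacobiSeries ha hτ z).differentiableAt

theorem iteratedDeriv_jacobiSeries (ha : JacobiSummable a) {τ : ℂ} (hτ : 0 < τ.im) (j : ℕ) :
    iteratedDeriv j (jacobiSeries a τ) =
      fun z => (2 * π * I) ^ j * jacobiSeries (jacobiMoment a j) τ z := by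
  induction j with
  | zero => simp [jacobiMoment_zero]
  | succ j ih =>
    rw [iteratedDeriv_succ, ih]
    ext z
    rw [((hasDerivAt_jacobiSeries (ha.jacobiMoment j) hτ z).const_mul _).deriv,
      jacobiMoment_succ j]
    ring

theorem jacobiSeries_jacobiMoment_comp_affine (ha : JacobiSummable a) {τ τ' : ℂ}
    (hτ : 0 < τ.im) (hτ' : 0 < τ'.im) {A B z₀ : ℂ} {φ : ℂ → ℂ} {j : ℕ} (hφ : ContDiff ℂ j φ)
    (hφa : ∀ z, jacobiSeries a τ' (A * z + B) = φ z * jacobiSeries a τ z)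
    (h0 : ∀ i < j, jacobiSeries (jacobiMoment a i) τ z₀ = 0) :
    A ^ j * jacobiSeries (jacobiMoment a j) τ' (A * z₀ + B) =
      φ z₀ * jacobiSeries (jacobiMoment a j) τ z₀ := by
  have hcomp : iteratedDeriv j (fun z => jacobiSeries a τ' (A * z + B)) z₀ =
      A ^ j * ((2 * π * I) ^ j * jacobiSeries (jacobiMoment a j) τ' (A * z₀ + B)) := by
    have hshift : ContDiff ℂ j fun z => jacobiSeries a τ' (z + B) :=
      (contDiff_jacobiSeries ha hτ').comp (contDiff_id.add contDiff_const)
    rw [iteratedDeriv_comp_const_mul hshift, iteratedDeriv_comp_add_const,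
      iteratedDeriv_jacobiSeries ha hτ']
  have hmul := iteratedDeriv_fun_mul_of_forall_lt_eq_zero hφ.contDiffAt
    (contDiff_jacobiSeries ha hτ).contDiffAt fun i hi => by
      rw [iteratedDeriv_jacobiSeries ha hτ]
      exact mul_eq_zero_of_right _ (h0 i hi)
  rw [← funext hφa, hcomp, iteratedDeriv_jacobiSeries ha hτ] at hmul
  refine mul_left_cancel₀ (pow_ne_zero j two_pi_I_ne_zero) ?_
  linear_combination hmul

theorem differentiableOn_jacobiSeries (ha : JacobiSummable a)
    (hneg : ∀ n < 0, ∀ ρ, a (n, ρ) = 0) (z : ℂ) :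
    DifferentiableOn ℂ (fun τ => jacobiSeries a τ z) {τ : ℂ | 0 < τ.im} := by
  intro τ₀ (hτ₀ : 0 < τ₀.im)
  obtain ⟨t, ht0, ht⟩ := exists_between hτ₀
  have hU : IsOpen {τ : ℂ | t < τ.im} := isOpen_lt continuous_const continuous_im
  suffices DifferentiableOn ℂ (fun τ => jacobiSeries a τ z) {τ : ℂ | t < τ.im} from
    (this.differentiableAt (hU.mem_nhds ht)).differentiableWithinAt
  refine differentiableOn_tsum_of_summable_norm (ha (t * I) z (by simpa using ht0))
    (fun p => ?_) hU fun ⟨n, ρ⟩ τ (hτ : t < τ.im) => ?_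
  · unfold jacobiTerm
    fun_prop
  · rcases lt_or_ge n 0 with hn | hn
    · simp [jacobiTerm, hneg n hn ρ]
    · have : (0 : ℝ) ≤ n := mod_cast hn
      simp only [norm_jacobiTerm, im_ofReal_mul, I_im, mul_one]
      gcongr

theorem exists_norm_exp_mul_jacobiSeries_le {m : ℤ} (hm : 0 < m) (ha : JacobiSummable a)
    (hsupp : ∀ n ρ : ℤ, 4 * n * m - ρ ^ 2 < 0 → a (n, ρ) = 0) (x y : ℝ) :
    ∃ B : ℝ, ∀ τ : ℂ, 1 ≤ τ.im →
      ‖exp (2 * π * I * m * x * (x * τ + y)) * jacobiSeries a τ (x * τ + y)‖ ≤ B := by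
  have hnorm (τ : ℂ) (p : ℤ × ℤ) :
      ‖exp (2 * π * I * m * x * (x * τ + y)) * jacobiTerm a τ (x * τ + y) p‖ =
        ‖a p‖ * Real.exp (-(2 * π * (p.1 + p.2 * x + m * x ^ 2) * τ.im)) := by
    rw [norm_mul, norm_jacobiTerm, norm_exp, mul_left_comm, ← Real.exp_add]
    congr 2
    simp
    ring
  have hquad (p : ℤ × ℤ) (hp : a p ≠ 0) : 0 ≤ p.1 + p.2 * x + m * x ^ 2 := by
    have hdisc : (0 : ℝ) ≤ 4 * p.1 * m - p.2 ^ 2 := mod_cast not_lt.1 (mt (hsupp p.1 p.2) hp)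
    have : (0 : ℝ) < m := mod_cast hm
    refine nonneg_of_mul_nonneg_right (a := 4 * (m : ℝ)) ?_ (by positivity)
    linear_combination hdisc + sq_nonneg (p.2 + 2 * m * x)
  obtain ⟨B, hB⟩ := ((ha I (x * I + y) (by simp)).mul_left
    ‖exp (2 * π * I * m * x * (x * I + y))‖)
  refine ⟨B, fun τ hτ => ?_⟩
  rw [jacobiSeries, ← tsum_mul_left]
  refine tsum_of_norm_bounded hB fun p => ?_
  rw [← norm_mul, hnorm, hnorm, I_im]
  by_cases hp : a p = 0
  · simp [hp]
  · have := hquad p hp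
    gcongr

theorem hasSum_jacobiSeries_qParam (ha : JacobiSummable a) (hneg : ∀ n < 0, ∀ ρ, a (n, ρ) = 0)
    (z : ℂ) {τ : ℂ} (hτ : 0 < τ.im) :
    HasSum (fun n : ℕ => (∑' ρ : ℤ, a (n, ρ) * exp (2 * π * I * ρ * z)) •
      Function.Periodic.qParam 1 τ ^ n) (jacobiSeries a τ z) := by
  have hterm (n ρ : ℤ) : jacobiTerm a τ z (n, ρ) =
      a (n, ρ) * exp (2 * π * I * ρ * z) * exp (2 * π * I * (n * τ)) := by
    rw [jacobiTerm, mul_assoc (a _), ← exp_add]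
    ring_nf
  have hpow (n : ℕ) : Function.Periodic.qParam 1 τ ^ n = exp (2 * π * I * ((n : ℤ) * τ)) := by
    rw [Function.Periodic.qParam, ← exp_nat_mul]
    push_cast
    ring_nf
  have hsummable := (ha τ z hτ).of_norm
  have hfiber (n : ℤ) : HasSum (fun ρ => jacobiTerm a τ z (n, ρ))
      ((∑' ρ : ℤ, a (n, ρ) * exp (2 * π * I * ρ * z)) * exp (2 * π * I * (n * τ))) := by
    simpa only [hterm, tsum_mul_right] using (hsummable.prod_factor n).hasSum
  have hsum := hsummable.hasSum.prod_fiberwise hfiber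
  rw [← (Nat.cast_injective (R := ℤ)).hasSum_iff fun n hn => ?_] at hsum
  · simpa only [hpow, smul_eq_mul] using! hsum
  · have hn0 : n < 0 := by
      contrapose! hn
      exact ⟨n.toNat, Int.toNat_of_nonneg hn⟩
    simp [hneg n hn0]

end JacobiSeries

section GammaRM

open scoped MatrixGroups

variable (r m : ℤ)

theorem finiteIndex_gammaRM (hr : r ≠ 0) : (GammaRM r m).FiniteIndex := by
  have : NeZero (r.natAbs ^ 2) := ⟨pow_ne_zero 2 (Int.natAbs_ne_zero.2 hr)⟩
  refine Subgroup.finiteIndex_of_le (H := CongruenceSubgroup.Gamma (r.natAbs ^ 2)) fun γ hγ => ?_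
  obtain ⟨h00, -, h10, h11⟩ := CongruenceSubgroup.Gamma_mem.1 hγ
  have hmodEq {x y : ℤ} (h : (x : ZMod (r.natAbs ^ 2)) = (y : ℤ)) : x ≡ y [ZMOD r ^ 2] := by
    simpa using (ZMod.intCast_eq_intCast_iff _ _ _).1 h
  have hdvd : r ∣ r ^ 2 := dvd_pow_self r two_ne_zero
  have h10' : γ 1 0 ≡ 0 [ZMOD r ^ 2] := hmodEq (mod_cast h10)
  exact ⟨(hmodEq (mod_cast h00)).of_dvd hdvd, (hmodEq (mod_cast h11)).of_dvd hdvd,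
    h10'.of_dvd hdvd, by simpa using h10'.mul_right m⟩

theorem T_mem_gammaRM : ModularGroup.T ∈ GammaRM r m := by
  refine ⟨?_, ?_, ?_, ?_⟩ <;> simp [ModularGroup.T]

end GammaRM

section JacobiForm

open UpperHalfPlane hiding I
open scoped MatrixGroups ModularForm Real

/-- The array `c` consists of the Fourier coefficients `c(n,ρ)` of a Jacobi form of weight `k` and
index `m`, stated in terms of the series `jacobiSeries c` itself. -/
structure IsJacobiCoeff (k m : ℤ) (c : ℤ × ℤ → ℂ) : Prop where
  summable : JacobiSummable c
  modular (γ : SL(2, ℤ)) (τ : ℍ) (z : ℂ) :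
    jacobiSeries c (γ • τ : ℍ) (z / denom γ τ) =
      denom γ τ ^ k * exp (2 * π * I * m * γ 1 0 * z ^ 2 / denom γ τ) * jacobiSeries c τ z
  elliptic (lam mu : ℤ) (τ : ℍ) (z : ℂ) :
    jacobiSeries c τ (z + lam * τ + mu) =
      exp (2 * π * I * (-m * lam ^ 2 * τ - 2 * m * lam * z)) * jacobiSeries c τ z
  eq_zero_of_neg (n ρ : ℤ) : 4 * n * m - ρ ^ 2 < 0 → c (n, ρ) = 0

/-- The function `τ ↦ ∑ ρ ^ j c(n,ρ) qⁿ e(ρx)`: up to the factor `(2πi) ^ j`, the `j`-th derivative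
in `z` of the Jacobi form at the real point `z = x`. -/
noncomputable def jacobiTaylor (c : ℤ × ℤ → ℂ) (j : ℕ) (x : ℝ) (τ : ℍ) : ℂ :=
  jacobiSeries (jacobiMoment c j) τ x

/-- The coefficient of `qⁿ` in `jacobiTaylor c j x`. -/
noncomputable def jacobiTaylorCoeff (c : ℤ × ℤ → ℂ) (j : ℕ) (x : ℝ) (n : ℤ) : ℂ :=
  ∑ᶠ ρ : ℤ, (ρ : ℂ) ^ j * c (n, ρ) * exp (2 * π * I * ρ * x)

theorem T_sub_C_exp_pow_dvd_iff_jacobiTaylorCoeff {c : ℤ × ℤ → ℂ} {x : ℝ} {n : ℤ} {ν : ℕ}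
    {f : ℂ[T;T⁻¹]} (hf : ∀ ρ, f.coeff ρ = c (n, ρ)) :
    (T 1 - C (exp (2 * π * I * x))) ^ ν ∣ f ↔ ∀ j < ν, jacobiTaylorCoeff c j x n = 0 := by
  have hmoment (j : ℕ) : laurentMoment (Units.mk0 (exp (2 * π * I * x)) (exp_ne_zero _)) j f =
      jacobiTaylorCoeff c j x n := by
    rw [laurentMoment_eq_finsum, jacobiTaylorCoeff]
    refine finsum_congr fun ρ => ?_
    rw [hf, Units.val_zpow_eq_zpow_val, Units.val_mk0, ← exp_int_mul]
    ring_nf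
  simp only [← hmoment]
  exact T_sub_C_pow_dvd_iff_laurentMoment (Units.mk0 _ (exp_ne_zero _))

namespace IsJacobiCoeff

variable {k m : ℤ} {c : ℤ × ℤ → ℂ} {j : ℕ} {x : ℝ}

theorem jacobiMoment_eq_zero_of_neg (hc : IsJacobiCoeff k m c) (j : ℕ) (n ρ : ℤ)
    (h : 4 * n * m - ρ ^ 2 < 0) : jacobiMoment c j (n, ρ) = 0 :=
  mul_eq_zero_of_right _ (hc.eq_zero_of_neg n ρ h)

theorem jacobiMoment_eq_zero_of_index_neg (hc : IsJacobiCoeff k m c) (hm : 0 < m) (j : ℕ) :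
    ∀ n < 0, ∀ ρ, jacobiMoment c j (n, ρ) = 0 := fun n hn ρ =>
  hc.jacobiMoment_eq_zero_of_neg j n ρ (by nlinarith [mul_neg_of_neg_of_pos hn hm, sq_nonneg ρ])

theorem finite_support (hc : IsJacobiCoeff k m c) (n : ℤ) :
    (Function.support fun ρ => c (n, ρ)).Finite := by
  refine (Set.finite_Icc (-(4 * n * m)) (4 * n * m)).subset fun ρ hρ => ?_
  have hsq : ρ ^ 2 ≤ 4 * n * m := sub_nonneg.1 (not_lt.1 (mt (hc.eq_zero_of_neg n ρ) hρ))
  exact abs_le.1 ((Int.le_self_sq |ρ|).trans ((sq_abs ρ).trans_le hsq))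

theorem slash_jacobiTaylor (hc : IsJacobiCoeff k m c) (h0 : ∀ i < j, jacobiTaylor c i x = 0)
    (γ : SL(2, ℤ)) (τ : ℍ) :
    (jacobiTaylor c j x ∣[k + (j : ℤ)] γ) τ =
      exp (2 * π * I * m * γ 1 0 * denom γ τ * x ^ 2) *
        jacobiSeries (jacobiMoment c j) τ (denom γ τ * x) := by
  have hD : denom γ τ ≠ 0 := denom_ne_zero _ _
  have hφa (w : ℂ) : jacobiSeries c τ (denom γ τ * w + 0) =
      denom γ τ ^ (-k) * exp (-(2 * π * I * m * γ 1 0 * denom γ τ * w ^ 2)) *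
        jacobiSeries c (γ • τ : ℍ) w := by
    have hmod := hc.modular γ τ (denom γ τ * w)
    rw [mul_div_cancel_left₀ w hD] at hmod
    rw [add_zero, hmod, exp_neg, zpow_neg]
    field_simp
  have htransfer := jacobiSeries_jacobiMoment_comp_affine hc.summable
    (γ • τ).im_pos τ.im_pos (by fun_prop) hφa fun i hi => congr_fun (h0 i hi) (γ • τ)
  rw [add_zero, exp_neg, zpow_neg] at htransfer
  rw [ModularForm.SL_slash_apply, jacobiTaylor, zpow_neg, zpow_add₀ hD, zpow_natCast]
  have := zpow_ne_zero k hD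
  field_simp at htransfer ⊢
  linear_combination -htransfer

theorem isBoundedAtImInfty_slash_jacobiTaylor (hc : IsJacobiCoeff k m c) (hm : 0 < m)
    (h0 : ∀ i < j, jacobiTaylor c i x = 0) (γ : SL(2, ℤ)) :
    IsBoundedAtImInfty (jacobiTaylor c j x ∣[k + (j : ℤ)] γ) := by
  obtain ⟨B, hB⟩ := exists_norm_exp_mul_jacobiSeries_le hm (hc.summable.jacobiMoment j)
    (hc.jacobiMoment_eq_zero_of_neg j) (γ 1 0 * x) (γ 1 1 * x)
  refine isBoundedAtImInfty_iff.2 ⟨B, 1, fun τ hτ => ?_⟩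
  have hdenom : denom γ τ * x = ((γ 1 0 * x : ℝ) : ℂ) * τ + ((γ 1 1 * x : ℝ) : ℂ) := by
    rw [ModularGroup.denom_apply]
    push_cast
    ring
  have hexp : 2 * π * I * m * γ 1 0 * denom γ τ * x ^ 2 =
      2 * π * I * m * ((γ 1 0 * x : ℝ) : ℂ) * (denom γ τ * x) := by
    push_cast
    ring
  rw [hc.slash_jacobiTaylor h0, hexp, hdenom]
  exact hB τ hτ

theorem jacobiSeries_jacobiMoment_elliptic (hc : IsJacobiCoeff k m c)
    (h0 : ∀ i < j, jacobiTaylor c i x = 0) (lam mu : ℤ) (τ : ℍ) :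
    jacobiSeries (jacobiMoment c j) τ (x + lam * τ + mu) =
      exp (2 * π * I * (-m * lam ^ 2 * τ - 2 * m * lam * x)) * jacobiTaylor c j x τ := by
  have helliptic (z : ℂ) : jacobiSeries c τ (1 * z + (lam * τ + mu)) =
      exp (2 * π * I * (-m * lam ^ 2 * τ - 2 * m * lam * z)) * jacobiSeries c τ z := by
    rw [one_mul, ← add_assoc, hc.elliptic]
  have htransfer := jacobiSeries_jacobiMoment_comp_affine hc.summable τ.im_pos τ.im_pos
    (by fun_prop) helliptic fun i hi => congr_fun (h0 i hi) τ
  rwa [one_pow, one_mul, one_mul, ← add_assoc] at htransfer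

theorem slash_jacobiTaylor_of_mem_gammaRM (hc : IsJacobiCoeff k m c) {r : ℤ} (hr : r ≠ 0) (s : ℤ)
    (h0 : ∀ i < j, jacobiTaylor c i (s / r) = 0) {γ : SL(2, ℤ)} (hγ : γ ∈ GammaRM r m) :
    jacobiTaylor c j (s / r) ∣[k + (j : ℤ)] γ = jacobiTaylor c j (s / r) := by
  obtain ⟨-, hd, hC, hCm⟩ := hγ
  obtain ⟨l, hl⟩ := Int.modEq_zero_iff_dvd.1 hC
  obtain ⟨b, hb⟩ := Int.modEq_zero_iff_dvd.1 hCm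
  obtain ⟨u, hu⟩ := hd.symm.dvd
  replace hl : (γ 1 0 : ℂ) = r * l := mod_cast hl
  replace hb : (γ 1 0 : ℂ) * m = r ^ 2 * b := mod_cast hb
  replace hu : (γ 1 1 : ℂ) - 1 = r * u := mod_cast hu
  have hr' : (r : ℂ) ≠ 0 := mod_cast hr
  ext τ
  have hdenom : denom γ τ * ((s / r : ℝ) : ℂ) =
      ((s / r : ℝ) : ℂ) + (l * s : ℤ) * τ + (u * s : ℤ) := by
    rw [ModularGroup.denom_apply]
    push_cast
    field_simp
    linear_combination (s * τ) * hl + s * hu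
  -- The modular and elliptic automorphy factors cancel, as `r² ∣ γ₁₀ m` makes the sum of their
  -- exponents `2πi` times an integer.
  have hcancel : exp (2 * π * I * m * γ 1 0 * denom γ τ * ((s / r : ℝ) : ℂ) ^ 2) *
      exp (2 * π * I * (-m * (l * s : ℤ) ^ 2 * τ - 2 * m * (l * s : ℤ) * ((s / r : ℝ) : ℂ))) =
        1 := by
    rw [← exp_add, exp_eq_one_iff, ModularGroup.denom_apply]
    refine ⟨b * s ^ 2 * (γ 1 1 - 2), ?_⟩
    have hl' : (l : ℂ) = γ 1 0 / r := by rw [hl]; field_simp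
    push_cast
    rw [hl']
    field_simp
    linear_combination (s ^ 2 * (γ 1 1 - 2)) * hb
  rw [hc.slash_jacobiTaylor h0, hdenom, hc.jacobiSeries_jacobiMoment_elliptic h0, ← mul_assoc,
    hcancel, one_mul]

/-- The modular form `τ ↦ ∑ ρ ^ j c(n,ρ) qⁿ e(ρs/r)` of weight `k + j` on `Γ(r,m)`, given that the
derivatives in `z` of order less than `j` of the Jacobi form vanish identically at `z = s/r`. -/
noncomputable def modularForm (hc : IsJacobiCoeff k m c) (hm : 0 < m) {r : ℤ} (hr : r ≠ 0) (s : ℤ)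
    (h0 : ∀ i < j, jacobiTaylor c i (s / r) = 0) :
    ModularForm ((GammaRM r m).map (Matrix.SpecialLinearGroup.mapGL ℝ)) (k + j) where
  toFun := jacobiTaylor c j (s / r)
  slash_action_eq' := by
    rintro _ ⟨γ, hγ, rfl⟩
    exact hc.slash_jacobiTaylor_of_mem_gammaRM hr s h0 hγ
  holo' := by
    have hdiff := differentiableOn_jacobiSeries (hc.summable.jacobiMoment j)
      (hc.jacobiMoment_eq_zero_of_index_neg hm j) (s / r : ℝ)
    refine mdifferentiable_iff.2 (hdiff.congr fun τ hτ => ?_)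
    change jacobiTaylor c j (s / r) (ofComplex τ) = _
    rw [jacobiTaylor, ofComplex_apply_of_im_pos hτ]
  bdd_at_cusps' := by
    have := finiteIndex_gammaRM r m hr
    intro cusp hcusp
    rw [Subgroup.IsArithmetic.isCusp_iff_isCusp_SL2Z] at hcusp
    rw [OnePoint.isBoundedAt_iff_forall_SL2Z hcusp]
    exact fun γ _ => hc.isBoundedAtImInfty_slash_jacobiTaylor hm h0 γ

theorem hasSum_jacobiTaylor (hc : IsJacobiCoeff k m c) (hm : 0 < m) (j : ℕ) (x : ℝ) (τ : ℍ) :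
    HasSum (fun n : ℕ => jacobiTaylorCoeff c j x n • Function.Periodic.qParam 1 τ ^ n)
      (jacobiTaylor c j x τ) := by
  have hcoeff (n : ℕ) : jacobiTaylorCoeff c j x n =
      ∑' ρ : ℤ, jacobiMoment c j (n, ρ) * exp (2 * π * I * ρ * x) :=
    (tsum_eq_finsum <| (hc.finite_support n).subset <|
      Function.support_subset_iff'.2 fun ρ hρ => by
        simp [Function.notMem_support.1 hρ]).symm
  simpa only [hcoeff] using! hasSum_jacobiSeries_qParam (hc.summable.jacobiMoment j)
    (hc.jacobiMoment_eq_zero_of_index_neg hm j) x τ.im_pos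

theorem jacobiTaylor_eq_zero (hc : IsJacobiCoeff k m c) (hm : 0 < m)
    (h0 : ∀ n : ℕ, jacobiTaylorCoeff c j x n = 0) : jacobiTaylor c j x = 0 := by
  ext τ
  have hsum := hc.hasSum_jacobiTaylor hm j x τ
  simp only [h0, zero_smul] at hsum
  exact hsum.unique hasSum_zero

theorem jacobiTaylorCoeff_eq_zero (hc : IsJacobiCoeff k m c) (hm : 0 < m) {r : ℤ} (hr : r ≠ 0)
    (s : ℤ) {ν : ℕ} (h0 : ∀ j < ν, ∀ n : ℕ, 12 * (n : ℤ) ≤ (k + j) * (GammaRM r m).index →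
      jacobiTaylorCoeff c j (s / r) n = 0) :
    ∀ j < ν, ∀ n : ℕ, jacobiTaylorCoeff c j (s / r) n = 0 := by
  have := finiteIndex_gammaRM r m hr
  intro j
  induction j using Nat.strong_induction_on with
  | _ j ih =>
    intro hj
    exact sturm_bound_of_hasSum (T_mem_gammaRM r m)
      (hc.modularForm hm hr s fun i hi => hc.jacobiTaylor_eq_zero hm (ih i hi (hi.trans hj)))
      (hc.hasSum_jacobiTaylor hm j (s / r)) (h0 j hj)

end IsJacobiCoeff

end JacobiForm

/-- Proposition 5.2: for a Jacobi form `g` of weight `k` and positive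
index `m`, with Fourier coefficients `c(n,ρ)` and `qⁿ`-coefficients the Laurent
polynomials `g_n(ζ)`, and for a positive integer `r`, an integer `s` and `ν ≥ 0`:
`(ζ − e(s/r))^ν` divides `g_n(ζ)` in `ℂ[ζ,ζ⁻¹]` for every `n ≥ 0` if and only if
`Σ_ρ ρ^j c(n,ρ) e(ρs/r) = 0` for all `0 ≤ j < ν` and `0 ≤ n ≤ ((k+j)/12)·[SL₂(ℤ):Γ(r,m)]`. -/
theorem stmt_4 (k : ℤ) (m : ℤ) (hm : 0 < m) (r : ℤ) (hr : 0 < r) (s : ℤ) (ν : ℕ)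
    (g : ℂ → ℂ → ℂ)
    (hol : DifferentiableOn ℂ (fun p : ℂ × ℂ => g p.1 p.2) {p : ℂ × ℂ | 0 < p.1.im})
    (transf₁ : ∀ γ : Matrix.SpecialLinearGroup (Fin 2) ℤ, ∀ τ z : ℂ, 0 < τ.im →
      g ((((γ : Matrix (Fin 2) (Fin 2) ℤ) 0 0 : ℂ) * τ + ((γ : Matrix (Fin 2) (Fin 2) ℤ) 0 1 : ℂ)) /
           (((γ : Matrix (Fin 2) (Fin 2) ℤ) 1 0 : ℂ) * τ + ((γ : Matrix (Fin 2) (Fin 2) ℤ) 1 1 : ℂ)))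
        (z / (((γ : Matrix (Fin 2) (Fin 2) ℤ) 1 0 : ℂ) * τ + ((γ : Matrix (Fin 2) (Fin 2) ℤ) 1 1 : ℂ))) =
      (((γ : Matrix (Fin 2) (Fin 2) ℤ) 1 0 : ℂ) * τ + ((γ : Matrix (Fin 2) (Fin 2) ℤ) 1 1 : ℂ)) ^ k *
        Complex.exp (2 * Real.pi * Complex.I * (m : ℂ) * ((γ : Matrix (Fin 2) (Fin 2) ℤ) 1 0 : ℂ) * z ^ 2 /
          (((γ : Matrix (Fin 2) (Fin 2) ℤ) 1 0 : ℂ) * τ + ((γ : Matrix (Fin 2) (Fin 2) ℤ) 1 1 : ℂ))) *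
        g τ z)
    (transf₂ : ∀ lam mu : ℤ, ∀ τ z : ℂ, 0 < τ.im →
      g τ (z + (lam : ℂ) * τ + (mu : ℂ)) =
        Complex.exp (2 * Real.pi * Complex.I *
            (-(m : ℂ) * (lam : ℂ) ^ 2 * τ - 2 * (m : ℂ) * (lam : ℂ) * z)) * g τ z)
    (c : ℤ × ℤ → ℂ)
    (habs : ∀ τ z : ℂ, 0 < τ.im → Summable (fun p : ℤ × ℤ =>
      ‖c p * Complex.exp (2 * Real.pi * Complex.I * ((p.1 : ℂ) * τ + (p.2 : ℂ) * z))‖))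
    (hsum : ∀ τ z : ℂ, 0 < τ.im →
      HasSum (fun p : ℤ × ℤ =>
        c p * Complex.exp (2 * Real.pi * Complex.I * ((p.1 : ℂ) * τ + (p.2 : ℂ) * z)))
        (g τ z))
    (hsupp : ∀ n ρ : ℤ, 4 * n * m - ρ ^ 2 < 0 → c (n, ρ) = 0)
    (gLP : ℤ → LaurentPolynomial ℂ)
    (hgLP : ∀ n ρ : ℤ, (gLP n).coeff ρ = c (n, ρ)) :
    (∀ n : ℤ, 0 ≤ n →
        (LaurentPolynomial.T 1 -
          LaurentPolynomial.C (Complex.exp (2 * Real.pi * Complex.I * (s : ℂ) / (r : ℂ)))) ^ ν ∣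
          gLP n)
    ↔ (∀ j : ℕ, j < ν → ∀ n : ℤ, 0 ≤ n →
        (n : ℝ) ≤ ((k : ℝ) + (j : ℝ)) / 12 * ((GammaRM r m).index : ℝ) →
        ∑ᶠ ρ : ℤ, (ρ : ℂ) ^ j * c (n, ρ) *
          Complex.exp (2 * Real.pi * Complex.I * (ρ : ℂ) * (s : ℂ) / (r : ℂ)) = 0) := by
  have hg {τ : ℂ} (hτ : 0 < τ.im) (z : ℂ) : g τ z = jacobiSeries c τ z :=
    (hsum τ z hτ).tsum_eq.symm
  have hc : IsJacobiCoeff k m c :=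
    { summable := habs
      modular γ τ z := by
        rw [← hg (γ • τ).im_pos, ← hg τ.im_pos, UpperHalfPlane.coe_specialLinearGroup_apply,
          ModularGroup.denom_apply]
        exact mod_cast transf₁ γ τ z τ.im_pos
      elliptic lam mu τ z := by
        rw [← hg τ.im_pos, ← hg τ.im_pos, transf₂ lam mu τ z τ.im_pos]
      eq_zero_of_neg := hsupp }
  have hcoeff (j : ℕ) (n : ℤ) : ∑ᶠ ρ : ℤ, (ρ : ℂ) ^ j * c (n, ρ) *
      exp (2 * Real.pi * I * ρ * s / r) = jacobiTaylorCoeff c j (s / r) n := by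
    simp only [jacobiTaylorCoeff, ofReal_div, ofReal_intCast, mul_div_assoc]
  have hdvd (n : ℤ) := T_sub_C_exp_pow_dvd_iff_jacobiTaylorCoeff (x := s / r) (ν := ν) (hgLP n)
  simp only [ofReal_div, ofReal_intCast, ← mul_div_assoc] at hdvd
  simp only [hdvd, hcoeff]
  refine ⟨fun h j hj n hn _ => h n hn j hj, fun h n hn j hj => ?_⟩
  lift n to ℕ using hn
  refine hc.jacobiTaylorCoeff_eq_zero hm hr.ne' s (fun i hi l hl => ?_) j hj n
  have hl' : 12 * (l : ℝ) ≤ (k + i) * (GammaRM r m).index := mod_cast hl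
  exact h i hi l l.cast_nonneg (by rw [Int.cast_natCast]; linarith)
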